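/- arXiv:2505.09585 — 4 statements merged into one kernel-verified Lean document; each statement's English description precedes it below -/
import Mathlib

section
/- Let F be a nonempty subset of ℤ^n and let φ_F(v) = inf_{u ∈ F} ⟨u, v⟩ ∈ ℝ ∪ {−∞}. If v₀ ∈ ℝ^n lies in the topological interior of the set {v ∈ ℝ^n : φ_F(v) > −∞}, then the infimum defining φ_F(v₀) is attained: there exists u₀ ∈ F with ⟨u₀, v₀⟩ = φ_F(v₀). (Second part of the paper's Lemma on attainment of tropical infima, allowing irrational v₀.) -/
/-!
For small `ε > 0` the points `v₀ ± ε eᵢ` still lie in the locus where `φ_F > -∞`, so `⟨u, v₀⟩ ± ε uᵢ`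
is bounded below uniformly in `u ∈ F`. On a sublevel set `{u ∈ F : ⟨u, v₀⟩ ≤ c}` this bounds every
coordinate of `u`; as `u` is a lattice point, the sublevel set is finite, and the infimum is a
minimum over it.
-/

/-- The tropicalization of a subset `F ⊆ ℤ^n`: `φ_F(v) = inf_{u ∈ F} ⟨u, v⟩`,
valued in `EReal = ℝ ∪ {±∞}`. -/
noncomputable def trop (n : ℕ) (F : Set (Fin n → ℤ)) (v : Fin n → ℝ) : EReal :=
  ⨅ u ∈ F, (((∑ i, (u i : ℝ) * v i) : ℝ) : EReal)

lemma exists_lower_bound_of_bot_lt_trop {n : ℕ} {F : Set (Fin n → ℤ)} {v : Fin n → ℝ}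
    (h : (⊥ : EReal) < trop n F v) : ∃ C : ℝ, ∀ u ∈ F, C ≤ ∑ i, (u i : ℝ) * v i := by
  obtain ⟨C, -, hC⟩ := EReal.lt_iff_exists_real_btwn.1 h
  refine ⟨C, fun u hu => ?_⟩
  have h2 : trop n F v ≤ (((∑ i, (u i : ℝ) * v i) : ℝ) : EReal) := iInf₂_le u hu
  exact_mod_cast hC.le.trans h2

lemma sum_mul_add_single {n : ℕ} (u : Fin n → ℤ) (v : Fin n → ℝ) (i : Fin n) (t : ℝ) :
    ∑ j, (u j : ℝ) * (v + Pi.single i t : Fin n → ℝ) j =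
      ∑ j, (u j : ℝ) * v j + u i * t := by
  simp [mul_add, Finset.sum_add_distrib, Pi.single_apply]

lemma finite_sublevel_of_mem_interior {n : ℕ} {F : Set (Fin n → ℤ)} {v₀ : Fin n → ℝ}
    (h : v₀ ∈ interior {v : Fin n → ℝ | (⊥ : EReal) < trop n F v}) (c : ℝ) :
    {u ∈ F | ∑ i, (u i : ℝ) * v₀ i ≤ c}.Finite := by
  obtain ⟨δ, hδ, hball⟩ := Metric.mem_nhds_iff.1 (mem_interior_iff_mem_nhds.1 h)
  have key : ∀ (i : Fin n) (t : ℝ), |t| < δ →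
      ∃ C : ℝ, ∀ u ∈ F, C ≤ ∑ j, (u j : ℝ) * v₀ j + u i * t := by
    intro i t ht
    have hmem : v₀ + Pi.single i t ∈ Metric.ball v₀ δ := by
      simpa [Metric.mem_ball, dist_eq_norm, Pi.norm_single] using ht
    obtain ⟨C, hC⟩ := exists_lower_bound_of_bot_lt_trop (hball hmem)
    exact ⟨C, fun u hu => sum_mul_add_single u v₀ i t ▸ hC u hu⟩
  have hpos : |δ / 2| < δ := by rw [abs_of_pos (by positivity)]; linarith
  have hneg : |-(δ / 2)| < δ := by rwa [abs_neg]
  choose A hA using fun i => key i (δ / 2) hpos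
  choose B hB using fun i => key i (-(δ / 2)) hneg
  refine (Set.finite_Icc (fun i => ⌊(A i - c) / (δ / 2)⌋) (fun i => ⌈(c - B i) / (δ / 2)⌉)).subset ?_
  rintro u ⟨hu, huc⟩
  refine ⟨fun i => ?_, fun i => ?_⟩
  · have h1 : (A i - c) / (δ / 2) ≤ (u i : ℝ) := by
      rw [div_le_iff₀ (by positivity)]
      linarith [hA i u hu]
    exact_mod_cast (Int.floor_le _).trans h1
  · have h1 : (u i : ℝ) ≤ (c - B i) / (δ / 2) := by
      rw [le_div_iff₀ (by positivity)]
      linarith [hB i u hu]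
    exact_mod_cast h1.trans (Int.le_ceil _)

/-- If `F ⊆ ℤ^n` is nonempty and `v₀ ∈ ℝ^n` lies in the topological interior of
the locus where `φ_F > −∞`, then the infimum defining `φ_F(v₀)` is attained at
some `u₀ ∈ F`. -/
theorem trop_inf_attained_of_mem_interior {n : ℕ} (F : Set (Fin n → ℤ)) (hF : F.Nonempty)
    (v₀ : Fin n → ℝ)
    (h : v₀ ∈ interior {v : Fin n → ℝ | (⊥ : EReal) < trop n F v}) :
    ∃ u₀ ∈ F, (((∑ i, (u₀ i : ℝ) * v₀ i) : ℝ) : EReal) = trop n F v₀ := by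
  obtain ⟨u₁, hu₁⟩ := hF
  obtain ⟨u₀, ⟨hu₀, hle⟩, hmin⟩ := Set.exists_min_image _
    (fun u : Fin n → ℤ => ∑ i, (u i : ℝ) * v₀ i)
    (finite_sublevel_of_mem_interior h (∑ i, (u₁ i : ℝ) * v₀ i)) ⟨u₁, hu₁, le_rfl⟩
  refine ⟨u₀, hu₀, le_antisymm (le_iInf₂ fun u hu => ?_) (iInf₂_le u₀ hu₀)⟩
  rw [EReal.coe_le_coe_iff]
  rcases le_total (∑ i, (u i : ℝ) * v₀ i) (∑ i, (u₁ i : ℝ) * v₀ i) with h1 | h1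
  · exact hmin u ⟨hu, h1⟩
  · exact hle.trans h1
end

section
/- Let P and Q• be rational d×r matrices with (Q•)ᵀP skew-symmetric. Then there exists a rational d×d matrix Λ with ΛP = Q• and ΛᵀP = −Q• if and only if ker P ⊆ ker Q• (as subspaces of ℚ^r). In particular, such a rational Λ-structure exists whenever P is injective. -/
open Matrix

/-!
If `Λ P = Q•`, then clearly `ker P ⊆ ker Q•`. Conversely, take a generalized inverse `G` of `P`,
i.e. `P G P = P` (`exists_generalizedInverse`). The columns of `1 - G P` lie in `ker P`, so
`ker P ⊆ ker Q•` gives `Q• G P = Q•`. With `A = Q• G`, the matrix `Λ = A - Aᵀ (1 - P G)` satisfies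
`Λ P = A P = Q•`, while `Λᵀ P = Gᵀ (Q•ᵀ P + Pᵀ Q•) - Q• = -Q•` by skew-symmetry of `Q•ᵀ P`.
-/

/-- Every rational matrix has a generalized inverse: extend a linear section of the
corestriction of `P` to its range to the whole codomain. -/
lemma exists_generalizedInverse {d r : ℕ} (P : Matrix (Fin d) (Fin r) ℚ) :
    ∃ G : Matrix (Fin r) (Fin d) ℚ, P * G * P = P := by
  obtain ⟨s, hs⟩ := (Matrix.toLin' P).rangeRestrict.exists_rightInverse_of_surjective
    (LinearMap.range_rangeRestrict _)
  obtain ⟨g, hg⟩ := LinearMap.exists_extend s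
  refine ⟨LinearMap.toMatrix' g, Matrix.toLin'.injective ?_⟩
  rw [Matrix.toLin'_mul, Matrix.toLin'_mul, Matrix.toLin'_toMatrix']
  refine LinearMap.ext fun v => ?_
  have h1 : g (Matrix.toLin' P v) = s ((Matrix.toLin' P).rangeRestrict v) :=
    LinearMap.congr_fun hg ((Matrix.toLin' P).rangeRestrict v)
  have h2 := congrArg Subtype.val (LinearMap.congr_fun hs ((Matrix.toLin' P).rangeRestrict v))
  simp only [LinearMap.comp_apply, h1]
  exact h2

lemma exists_lambda_of_ker_le {d r : ℕ} (P Qb : Matrix (Fin d) (Fin r) ℚ)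
    (hskew : (Qbᵀ * P)ᵀ = -(Qbᵀ * P))
    (hker : ∀ v : Fin r → ℚ, P.mulVec v = 0 → Qb.mulVec v = 0) :
    ∃ Λ : Matrix (Fin d) (Fin d) ℚ, Λ * P = Qb ∧ Λᵀ * P = -Qb := by
  obtain ⟨G, hG⟩ := exists_generalizedInverse P
  have hQ : Qb * G * P = Qb := by
    refine Matrix.ext_of_mulVec_single fun i => ?_
    have h := hker ((G * P) *ᵥ Pi.single i 1 - Pi.single i 1) (by
      rw [Matrix.mulVec_sub, Matrix.mulVec_mulVec, ← Matrix.mul_assoc, hG, sub_self])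
    rw [Matrix.mulVec_sub, Matrix.mulVec_mulVec, ← Matrix.mul_assoc] at h
    exact sub_eq_zero.mp h
  have hPQ : Pᵀ * Qb = -(Qbᵀ * P) := by
    rw [← hskew, Matrix.transpose_mul, Matrix.transpose_transpose]
  refine ⟨Qb * G - (Qb * G)ᵀ * (1 - P * G), ?_, ?_⟩
  · rw [Matrix.sub_mul, hQ, Matrix.mul_assoc, Matrix.sub_mul, hG, Matrix.one_mul, sub_self,
      Matrix.mul_zero, sub_zero]
  · have h1 : (Qb * G)ᵀ * P = Gᵀ * (Qbᵀ * P) := by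
      rw [Matrix.transpose_mul, Matrix.mul_assoc]
    have h2 : (P * G)ᵀ * Qb = -(Gᵀ * (Qbᵀ * P)) := by
      rw [Matrix.transpose_mul, Matrix.mul_assoc, hPQ, Matrix.mul_neg]
    rw [Matrix.transpose_sub, Matrix.transpose_mul (Qb * G)ᵀ, Matrix.transpose_transpose,
      Matrix.transpose_sub, Matrix.transpose_one, Matrix.sub_mul, Matrix.mul_assoc _ (Qb * G) P,
      hQ, Matrix.sub_mul, Matrix.one_mul, h1, h2]
    abel

/-- For rational `d×r` matrices `P` and `Q•` with `(Q•)ᵀ P` skew-symmetric, a rational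
`Λ`-structure (a `d×d` matrix `Λ` with `Λ P = Q•` and `Λᵀ P = −Q•`) exists if and only
if `ker P ⊆ ker Q•`.  In particular, one exists whenever `P` is injective. -/
theorem lambda_structure_exists_iff (d r : ℕ) (P Qb : Matrix (Fin d) (Fin r) ℚ)
    (hskew : (Qbᵀ * P)ᵀ = -(Qbᵀ * P)) :
    ((∃ Λ : Matrix (Fin d) (Fin d) ℚ, Λ * P = Qb ∧ Λᵀ * P = -Qb) ↔
      ∀ v : Fin r → ℚ, P.mulVec v = 0 → Qb.mulVec v = 0) ∧
    (Function.Injective P.mulVec →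
      ∃ Λ : Matrix (Fin d) (Fin d) ℚ, Λ * P = Qb ∧ Λᵀ * P = -Qb) := by
  refine ⟨⟨?_, exists_lambda_of_ker_le P Qb hskew⟩, fun hinj => ?_⟩
  · rintro ⟨Λ, h, -⟩ v hv
    rw [← h, ← Matrix.mulVec_mulVec, hv, Matrix.mulVec_zero]
  · refine exists_lambda_of_ker_le P Qb hskew fun v hv => ?_
    rw [hinj (hv.trans (Matrix.mulVec_zero P).symm), Matrix.mulVec_zero]
end

section
/- Let P and Q′ be integer d×r matrices with (Q′)ᵀP skew-symmetric. Suppose the image of P is a saturated sublattice of ℤ^d (i.e., whenever k·m lies in the image of P for some nonzero integer k and m ∈ ℤ^d, then m lies in the image of P) and that ker P ⊆ ker Q′. Then there exists an integer d×d matrix Λ with ΛP = Q′ and ΛᵀP = −Q′. (This is the paper's existence result for integral Λ-structures for saturated P, with the target lattice identified with ℤ^d via a choice of basis.) -/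
open Matrix

/-!
Saturation makes `ℤ^d / im P` torsion-free, hence free, so `im P` is a direct summand of `ℤ^d`;
composing a projection onto `im P` with a section of `ℤ^r → im P` gives an integral generalized
inverse `S` of `P`, i.e. `P S P = P` (`exists_generalized_inverse`). The inclusion of kernels then
gives `Q' S P = Q'`. With these two identities, the matrix
`Λ = Q' S - Sᵀ Q'ᵀ + Sᵀ (Q'ᵀ P) S` satisfies `Λ P = Q'`, and it is skew-symmetric because
`Q'ᵀ P` is, so `Λᵀ P = -Q'`.
-/

/-- An integer matrix with saturated image has an integral generalized inverse. -/
lemma exists_generalized_inverse {d r : ℕ} (P : Matrix (Fin d) (Fin r) ℤ)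
    (hsat : ∀ (k : ℤ) (m : Fin d → ℤ), k ≠ 0 →
      (∃ v, P.mulVec v = k • m) → ∃ v, P.mulVec v = m) :
    ∃ S : Matrix (Fin r) (Fin d) ℤ, P * S * P = P := by
  let f := P.mulVecLin
  let N := LinearMap.range f
  have : Module.IsTorsionFree ℤ ((Fin d → ℤ) ⧸ N) := by
    refine Module.IsTorsionFree.of_smul_eq_zero fun k x hx => ?_
    by_contra! hne
    obtain ⟨m, rfl⟩ := N.mkQ_surjective x
    rw [← map_smul] at hx
    simp only [Submodule.mkQ_apply, Submodule.Quotient.mk_eq_zero, ne_eq] at hx hne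
    exact hne.2 (hsat k m hne.1 hx)
  obtain ⟨s, hs⟩ := Module.projective_lifting_property N.mkQ LinearMap.id N.mkQ_surjective
  obtain ⟨t, ht⟩ := Module.projective_lifting_property f.rangeRestrict LinearMap.id
    f.surjective_rangeRestrict
  -- `x - s [x]` is the projection onto `im P` along the image of the section `s`.
  let p : (Fin d → ℤ) →ₗ[ℤ] N := LinearMap.codRestrict N (LinearMap.id - s ∘ₗ N.mkQ) fun x => by
    rw [← Submodule.Quotient.mk_eq_zero, ← Submodule.mkQ_apply]
    have := LinearMap.congr_fun hs (N.mkQ x)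
    simp only [LinearMap.comp_apply, LinearMap.id_apply] at this
    simp only [LinearMap.sub_apply, LinearMap.comp_apply, LinearMap.id_apply, map_sub, this, sub_self]
  refine ⟨LinearMap.toMatrix' (t ∘ₗ p), ?_⟩
  refine Matrix.ext_of_mulVec_single fun i => ?_
  generalize (Pi.single i 1 : Fin r → ℤ) = v
  have h1 : ((p (f v) : N) : Fin d → ℤ) = f v := by
    have : N.mkQ (f v) = 0 := by simp [N]
    simp only [p, LinearMap.codRestrict_apply, LinearMap.sub_apply, LinearMap.comp_apply,
      LinearMap.id_apply, this, map_zero, sub_zero]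
  have h2 : f (t (p (f v))) = p (f v) :=
    congrArg Subtype.val (LinearMap.congr_fun ht (p (f v)))
  rw [← Matrix.mulVec_mulVec, ← Matrix.mulVec_mulVec, LinearMap.toMatrix'_mulVec]
  exact h2.trans h1

/-- Existence of integral `Λ`-structures: if `P, Q′` are integer `d×r` matrices with
`(Q′)ᵀ P` skew-symmetric, the image of `P` is a saturated sublattice of `ℤ^d`, and
`ker P ⊆ ker Q′`, then there is an integer `d×d` matrix `Λ` with `Λ P = Q′` and
`Λᵀ P = −Q′`. -/
theorem integral_lambda_structure_exists (d r : ℕ) (P Q' : Matrix (Fin d) (Fin r) ℤ)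
    (hskew : (Q'ᵀ * P)ᵀ = -(Q'ᵀ * P))
    (hsat : ∀ (k : ℤ) (m : Fin d → ℤ), k ≠ 0 →
      (∃ v, P.mulVec v = k • m) → ∃ v, P.mulVec v = m)
    (hker : ∀ v : Fin r → ℤ, P.mulVec v = 0 → Q'.mulVec v = 0) :
    ∃ Λ : Matrix (Fin d) (Fin d) ℤ, Λ * P = Q' ∧ Λᵀ * P = -Q' := by
  obtain ⟨S, hS⟩ := exists_generalized_inverse P hsat
  have hQ : Q' * S * P = Q' := by
    refine Matrix.ext_of_mulVec_single fun i => ?_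
    generalize (Pi.single i 1 : Fin r → ℤ) = v
    have h := hker ((S * P) *ᵥ v - v) (by
      rw [Matrix.mulVec_sub, Matrix.mulVec_mulVec, ← Matrix.mul_assoc, hS, sub_self])
    rwa [Matrix.mulVec_sub, Matrix.mulVec_mulVec, ← Matrix.mul_assoc, sub_eq_zero] at h
  let L := Q' * S - Sᵀ * Q'ᵀ + Sᵀ * (Q'ᵀ * P) * S
  have hLP : L * P = Q' := by
    have h : Sᵀ * (Q'ᵀ * P) * S * P = Sᵀ * Q'ᵀ * P := by
      calc Sᵀ * (Q'ᵀ * P) * S * P = Sᵀ * Q'ᵀ * (P * S * P) := by simp only [Matrix.mul_assoc]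
        _ = Sᵀ * Q'ᵀ * P := by rw [hS]
    simp only [L, Matrix.add_mul, Matrix.sub_mul, hQ, h, sub_add_cancel]
  have hLT : Lᵀ = -L := by
    have h : (Sᵀ * (Q'ᵀ * P) * S)ᵀ = -(Sᵀ * (Q'ᵀ * P) * S) := by
      rw [Matrix.transpose_mul, Matrix.transpose_mul Sᵀ, hskew, Matrix.transpose_transpose,
        Matrix.neg_mul, Matrix.mul_neg, ← Matrix.mul_assoc]
    simp only [L, Matrix.transpose_add, Matrix.transpose_sub, h]
    simp only [Matrix.transpose_mul, Matrix.transpose_transpose]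
    abel
  exact ⟨L, hLP, by rw [hLT, Matrix.neg_mul, hLP]⟩
end

section
/- Let P and Q• be rational d×r matrices with (Q•)ᵀP skew-symmetric, and let Λ be a rational d×d matrix with ΛP = Q• and ΛᵀP = −Q•. Define the 2d×r block matrices P′ := [P; 0] and Q″ := [Q•; P], the 2d×d block matrix A := [I_d; 0], and the 2d×2d block matrix Λ′ := [[Λ, −I_d], [I_d, 0]]. Then: (1) (Q″)ᵀP′ = (Q•)ᵀP, so it is skew-symmetric; (2) Λ′P′ = Q″ and (Λ′)ᵀP′ = −Q″, so Λ′ is a Λ-structure for the new data; (3) Λ′ is invertible, with inverse given by (n, m) ↦ (m, Λm − n); (4) A is injective and satisfies AP = P′ and AᵀQ″ = Q•; (5) AᵀΛ′A = Λ (so Λ and Λ′ are congruent); and (6) if P and Q• are injective then P′ and Q″ are injective. (This is the paper's embedding of any seed datum with a Λ-structure into one with an invertible Λ-structure.) -/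
/-!
Everything is block-matrix multiplication, using `Λ P = Q•` and `Λᵀ P = -Q•` for the two
`Λ`-structure identities. The injectivity claims for `A`, `P′` and `Q″` follow from injectivity
of their top blocks `I`, `P` and `Q•` (`injective_mulVec_fromRows`).
-/

open Matrix

/-- The `2d×r` block matrix `P′ := [P; 0]`. -/
def Pnew (d r : ℕ) (P : Matrix (Fin d) (Fin r) ℚ) : Matrix (Fin d ⊕ Fin d) (Fin r) ℚ :=
  fromRows P 0

/-- The `2d×r` block matrix `Q″ := [Q•; P]`. -/
def Qnew (d r : ℕ) (Qb P : Matrix (Fin d) (Fin r) ℚ) : Matrix (Fin d ⊕ Fin d) (Fin r) ℚ :=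
  fromRows Qb P

/-- The `2d×d` block matrix `A := [I_d; 0]`. -/
def Anew (d : ℕ) : Matrix (Fin d ⊕ Fin d) (Fin d) ℚ := fromRows 1 0

/-- The `2d×2d` block matrix `Λ′ := [[Λ, −I_d], [I_d, 0]]`. -/
def Lnew (d : ℕ) (Λ : Matrix (Fin d) (Fin d) ℚ) : Matrix (Fin d ⊕ Fin d) (Fin d ⊕ Fin d) ℚ :=
  fromBlocks Λ (-1) 1 0

/-- The candidate inverse of `Λ′`, given by `(n, m) ↦ (m, Λm − n)`. -/
def Linv (d : ℕ) (Λ : Matrix (Fin d) (Fin d) ℚ) : Matrix (Fin d ⊕ Fin d) (Fin d ⊕ Fin d) ℚ :=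
  fromBlocks 0 1 (-1) Λ

/-- The top block of `[M; N] v` is `M v`, so injectivity of `M` alone suffices. -/
theorem injective_mulVec_fromRows {d r : ℕ} (M N : Matrix (Fin d) (Fin r) ℚ)
    (hM : Function.Injective M.mulVec) : Function.Injective (fromRows M N).mulVec := by
  intro v w h
  apply hM
  simp only [fromRows_mulVec] at h
  exact (Sum.elim_eq_iff.mp h).1

/-- Embedding of a seed datum with a `Λ`-structure into one with an invertible
`Λ`-structure: with `P′ = [P; 0]`, `Q″ = [Q•; P]`, `A = [I; 0]`,
`Λ′ = [[Λ, −I], [I, 0]]`, one has (1) `(Q″)ᵀ P′ = (Q•)ᵀ P`, which is therefore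
skew-symmetric; (2) `Λ′ P′ = Q″` and `(Λ′)ᵀ P′ = −Q″`; (3) `Λ′` is invertible with
inverse `(n, m) ↦ (m, Λm − n)`; (4) `A` is injective, `A P = P′`, `Aᵀ Q″ = Q•`;
(5) `Aᵀ Λ′ A = Λ`; and (6) if `P` and `Q•` are injective then so are `P′` and `Q″`. -/
theorem invertible_lambda_embedding (d r : ℕ) (P Qb : Matrix (Fin d) (Fin r) ℚ)
    (hskew : (Qbᵀ * P)ᵀ = -(Qbᵀ * P))
    (Λ : Matrix (Fin d) (Fin d) ℚ) (hΛ : Λ * P = Qb) (hΛt : Λᵀ * P = -Qb) :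
    ((Qnew d r Qb P)ᵀ * Pnew d r P = Qbᵀ * P ∧
      ((Qnew d r Qb P)ᵀ * Pnew d r P)ᵀ = -((Qnew d r Qb P)ᵀ * Pnew d r P)) ∧
    (Lnew d Λ * Pnew d r P = Qnew d r Qb P ∧
      (Lnew d Λ)ᵀ * Pnew d r P = -(Qnew d r Qb P)) ∧
    (Lnew d Λ * Linv d Λ = 1 ∧ Linv d Λ * Lnew d Λ = 1 ∧
      ∀ nv mv : Fin d → ℚ,
        (Linv d Λ).mulVec (Sum.elim nv mv) = Sum.elim mv (Λ.mulVec mv - nv)) ∧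
    (Function.Injective (Anew d).mulVec ∧
      Anew d * P = Pnew d r P ∧ (Anew d)ᵀ * Qnew d r Qb P = Qb) ∧
    (Anew d)ᵀ * Lnew d Λ * Anew d = Λ ∧
    (Function.Injective P.mulVec → Function.Injective Qb.mulVec →
      Function.Injective (Pnew d r P).mulVec ∧
        Function.Injective (Qnew d r Qb P).mulVec) := by
  have h1 : (Qnew d r Qb P)ᵀ * Pnew d r P = Qbᵀ * P := by
    simp [Qnew, Pnew, transpose_fromRows, fromCols_mul_fromRows]
  refine ⟨⟨h1, by rw [h1, hskew]⟩, ⟨?_, ?_⟩, ⟨?_, ?_, ?_⟩, ⟨?_, ?_, ?_⟩, ?_, ?_⟩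
  · simp [Lnew, Pnew, Qnew, fromBlocks_mul_fromRows, hΛ]
  · simp [Lnew, Pnew, Qnew, fromBlocks_transpose, fromBlocks_mul_fromRows, hΛt, fromRows_neg]
  · simp [Lnew, Linv, fromBlocks_multiply]
  · simp [Lnew, Linv, fromBlocks_multiply]
  · intro nv mv
    simp [Linv, fromBlocks_mulVec, neg_mulVec, sub_eq_neg_add]
  · exact injective_mulVec_fromRows 1 0 fun v w h => by simpa using h
  · simp [Anew, Pnew, fromRows_mul]
  · simp [Anew, Qnew, transpose_fromRows, fromCols_mul_fromRows]
  · simp [Anew, Lnew, transpose_fromRows, fromCols_mul_fromBlocks, fromCols_mul_fromRows]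
  · exact fun hP hQ => ⟨injective_mulVec_fromRows P 0 hP, injective_mulVec_fromRows Qb P hQ⟩
end
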